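/- arXiv:2505.21484 — 9 statements merged into one kernel-verified Lean document; each statement's English description precedes it below -/
import Mathlib

section
/- Fix an integer k ≥ 2 and ε > 0. Then there exists a finitely supported probability distribution μ on the collection of finite subsets E ⊆ ℕ with at least k elements such that for every 1 ≤ i ≤ k, the total variation distance between the pushforward α_i(μ) and μ is less than ε. -/
/-!
There is an exact solution among finitely additive measures. Let `p` be a nonprincipal ultrafilter
on `ℕ+` and `P n` the ultrafilter of "random `n`-element sets", obtained by choosing the elements
`x₁ < x₂ < ⋯ < xₙ` successively along `p`. Since each element is generic over the earlier ones,
every deletion map with `1 ≤ i ≤ n + 1` sends `P (n + 1)` to `P n` (`tendsto_adel`), so averaging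
`P n` over many values of `n` is almost invariant under all the `α_i` at once.

To pass to genuine finitely supported measures, consider the linear map `defect k` taking `ν` to
the tuple `(α_i ν - ν)_{1 ≤ i ≤ k}` in `ℓ¹`. If its image on probability vectors avoided the ball
of radius `ε`, Hahn–Banach would give a continuous functional bounded below by some `u > 0` on that
image, that is, bounded functions `f_i` with `∑ i, (f_i (α_i E) - f_i E) ≥ u` for every `E` with
`k ≤ |E|`. Taking limits along `P (n + 1)` gives `c n - c (n + 1) ≥ u` for all `n ≥ k`, where
`c n = ∑ i, lim_{P n} f_i` is bounded: a contradiction (`exists_small_defect`).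
-/


/-!
STATEMENT 0. ℕ = {1,2,…} is modelled by `ℕ+`.
`nthSmallest E i` is the i-th smallest element of `E` (1-indexed, defined when `i ≤ E.card`),
and `adel i E = E \ {i-th smallest element of E}` is the deletion map α_i.
-/

/-- The `i`-th smallest element (1-indexed) of a finite set of positive integers. -/
def nthSmallest (E : Finset ℕ+) (i : ℕ) : ℕ+ :=
  (E.sort (· ≤ ·)).getD (i - 1) 1

/-- The deletion map `α_i`, removing the `i`-th smallest element. -/
def adel (i : ℕ) (E : Finset ℕ+) : Finset ℕ+ :=
  E.erase (nthSmallest E i)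

open Filter Topology

/-! ### Deletion maps and insertion of a new minimum -/

lemma adel_one_insert {x : ℕ+} {E : Finset ℕ+} (h : ∀ y ∈ E, x < y) :
    adel 1 (insert x E) = E := by
  have hx : x ∉ E := fun hx => lt_irrefl _ (h x hx)
  have : nthSmallest (insert x E) 1 = x := by
    rw [nthSmallest, Finset.sort_insert _ (fun b hb => (h b hb).le) hx]
    simp
  rw [adel, this, Finset.erase_insert hx]

lemma adel_succ_insert {x : ℕ+} {E : Finset ℕ+} (h : ∀ y ∈ E, x < y) {j : ℕ}
    (hj : j < E.card) :
    adel (j + 2) (insert x E) = insert x (adel (j + 1) E) := by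
  have hx : x ∉ E := fun hx => lt_irrefl _ (h x hx)
  have h1 : nthSmallest (insert x E) (j + 2) = nthSmallest E (j + 1) := by
    rw [nthSmallest, nthSmallest, Finset.sort_insert _ (fun b hb => (h b hb).le) hx]
    simp
  have h2 : nthSmallest E (j + 1) ∈ E := by
    have hl : j < (E.sort (· ≤ ·)).length := by simpa using hj
    have : nthSmallest E (j + 1) = (E.sort (· ≤ ·))[j] := by
      rw [nthSmallest, Nat.add_sub_cancel, List.getD_eq_getElem _ _ hl]
    rw [this, ← Finset.mem_sort (· ≤ ·)]
    exact List.getElem_mem hl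
  rw [adel, adel, h1, Finset.erase_insert_of_ne]
  rintro rfl
  exact hx h2

/-! ### Generic `n`-element sets -/

/-- The ultrafilter of generic `n`-element subsets of `ℕ+`: a generic `(n + 1)`-element set is
`insert x E` with `x` chosen along a fixed nonprincipal ultrafilter and then `E` a generic
`n`-element set, so that `x` is almost surely below all of `E`. -/
noncomputable def genericSet : ℕ → Ultrafilter (Finset ℕ+)
  | 0 => pure ∅
  | n + 1 => (hyperfilter ℕ+).bind fun x => (genericSet n).map (insert x)

lemma eventually_genericSet_succ {n : ℕ} {Q : Finset ℕ+ → Prop} :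
    (∀ᶠ E in (genericSet (n + 1) : Filter (Finset ℕ+)), Q E) ↔
      ∀ᶠ x in (hyperfilter ℕ+ : Filter ℕ+),
        ∀ᶠ E in (genericSet n : Filter (Finset ℕ+)), Q (insert x E) :=
  Iff.rfl

lemma eventually_hyperfilter_gt (x : ℕ+) : ∀ᶠ z in (hyperfilter ℕ+ : Filter ℕ+), x < z := by
  apply Filter.hyperfilter_le_cofinite
  rw [Filter.mem_cofinite]
  refine (Set.finite_Iic x).subset fun z hz => ?_
  simpa using hz

lemma genericSet_spec (n : ℕ) (x : ℕ+) :
    ∀ᶠ E in (genericSet n : Filter (Finset ℕ+)), E.card = n ∧ ∀ y ∈ E, x < y := by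
  induction n generalizing x with
  | zero =>
    change (∅ : Finset ℕ+).card = 0 ∧ ∀ y ∈ (∅ : Finset ℕ+), x < y
    simp
  | succ n ih =>
    rw [eventually_genericSet_succ]
    filter_upwards [eventually_hyperfilter_gt x] with z hz
    filter_upwards [ih z] with E hE
    have hzE : z ∉ E := fun h => lt_irrefl _ (hE.2 z h)
    refine ⟨by rw [Finset.card_insert_of_notMem hzE, hE.1], fun y hy => ?_⟩
    rcases Finset.mem_insert.1 hy with rfl | hy
    · exact hz
    · exact hz.trans (hE.2 y hy)

/-- Deleting any one element of a generic `(n + 1)`-element set leaves a generic `n`-element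
set. -/
lemma tendsto_adel (n i : ℕ) (h1 : 1 ≤ i) (hi : i ≤ n + 1) :
    Tendsto (adel i) (genericSet (n + 1) : Filter (Finset ℕ+)) (genericSet n) := by
  obtain ⟨j, rfl⟩ : ∃ j, i = j + 1 := ⟨i - 1, by omega⟩
  induction j generalizing n with
  | zero =>
    rw [Filter.tendsto_iff_eventually]
    intro Q hQ
    rw [eventually_genericSet_succ]
    refine Eventually.of_forall fun x => ?_
    filter_upwards [hQ, genericSet_spec n x] with E hE hx
    rwa [adel_one_insert hx.2]
  | succ j ih =>
    obtain ⟨m, rfl⟩ : ∃ m, n = m + 1 := ⟨n - 1, by omega⟩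
    rw [Filter.tendsto_iff_eventually]
    intro Q hQ
    rw [eventually_genericSet_succ] at hQ ⊢
    filter_upwards [hQ] with x hx
    filter_upwards [(ih m (by omega) (by omega)).eventually hx, genericSet_spec (m + 1) x]
      with E hE hxE
    rwa [adel_succ_insert hxE.2 (by omega)]

/-- Bounded functions converge along every ultrafilter. -/
lemma exists_tendsto_ultrafilter {α : Type*} (U : Ultrafilter α) (g : α → ℝ) (B : ℝ)
    (hg : ∀ a, |g a| ≤ B) : ∃ c, |c| ≤ B ∧ Tendsto g U (𝓝 c) := by
  obtain ⟨c, hc, h⟩ := (isCompact_Icc (a := -B) (b := B)).ultrafilter_le_nhds (U.map g)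
    (by
      rw [Ultrafilter.coe_map, Filter.le_principal_iff]
      exact Filter.mem_map.2 (Filter.Eventually.of_forall fun a => abs_le.1 (hg a)))
  exact ⟨c, abs_le.2 hc, h⟩

/-! ### The defect of invariance as a point of `ℓ¹` -/

/-- `ℓ¹(ℕ × Finset ℕ+)`; the coordinates `(i, ·)` hold a signed measure attached to `α_i`. -/
abbrev DefectSpace := lp (fun _ : ℕ × Finset ℕ+ => ℝ) 1

/-- The linear map `ν ↦ (α_i ν - ν)_{1 ≤ i ≤ k}` on finitely supported signed measures. -/
noncomputable def defect (k : ℕ) : (Finset ℕ+ →₀ ℝ) →ₗ[ℝ] DefectSpace :=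
  Finsupp.linearCombination ℝ fun E =>
    ∑ i ∈ Finset.Icc 1 k, (lp.single 1 (i, adel i E) (1 : ℝ) - lp.single 1 (i, E) (1 : ℝ))

/-- Finitely supported probability measures on the finite sets with at least `k` elements. -/
def probs (k : ℕ) : Set (Finset ℕ+ →₀ ℝ) :=
  {ν | (∀ E, 0 ≤ ν E) ∧ (∀ E, E.card < k → ν E = 0) ∧
    Finsupp.linearCombination ℝ (fun _ => (1 : ℝ)) ν = 1}

lemma convex_probs (k : ℕ) : Convex ℝ (probs k) := by
  rintro μ ⟨h1, h2, h3⟩ ν ⟨g1, g2, g3⟩ a b ha hb hab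
  refine ⟨fun E => ?_, fun E hE => ?_, ?_⟩
  · have := h1 E
    have := g1 E
    simp only [Finsupp.add_apply, Finsupp.smul_apply, smul_eq_mul]
    positivity
  · simp [h2 E hE, g2 E hE]
  · rw [map_add, map_smul, map_smul, h3, g3]
    simpa using hab

lemma exists_small_defect (k : ℕ) (ε : ℝ) (hε : 0 < ε) :
    ∃ ν ∈ probs k, ‖defect k ν‖ < ε := by
  by_contra! hcon
  have hdisj : Disjoint (Metric.ball (0 : DefectSpace) ε) (defect k '' probs k) := by
    rw [Set.disjoint_left]
    rintro _ hx ⟨ν, hν, rfl⟩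
    exact absurd (hcon ν hν) (not_le.2 (by simpa using hx))
  obtain ⟨φ, u, hball, hφ⟩ := geometric_hahn_banach_open (convex_ball (0 : DefectSpace) ε)
    Metric.isOpen_ball ((convex_probs k).linear_image (defect k)) hdisj
  have hu : 0 < u := by simpa using hball 0 (by simpa using hε)
  -- The functional `φ` on `ℓ¹` is given by the bounded functions `f i`.
  set f : ℕ → Finset ℕ+ → ℝ := fun i E => φ (lp.single 1 (i, E) (1 : ℝ)) with hf
  have hfB : ∀ i E, |f i E| ≤ ‖φ‖ := fun i E => by
    have := φ.le_opNorm (lp.single 1 (i, E) (1 : ℝ))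
    rw [lp.norm_single (by simp)] at this
    simpa using this
  have hE : ∀ E : Finset ℕ+, k ≤ E.card →
      u ≤ ∑ i ∈ Finset.Icc 1 k, (f i (adel i E) - f i E) := fun E hE => by
    have hmem : Finsupp.single E (1 : ℝ) ∈ probs k := by
      refine ⟨fun F => ?_, fun F hF => ?_, by simp⟩
      · rw [Finsupp.single_apply]
        split_ifs <;> simp
      · rw [Finsupp.single_eq_of_ne]
        rintro rfl
        omega
    simpa [defect, hf] using hφ _ ⟨_, hmem, rfl⟩
  choose c hcB hc using fun i n =>
    exists_tendsto_ultrafilter (genericSet n) (f i) ‖φ‖ (hfB i)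
  have hstep : ∀ n, k ≤ n →
      u ≤ ∑ i ∈ Finset.Icc 1 k, c i n - ∑ i ∈ Finset.Icc 1 k, c i (n + 1) := fun n hn => by
    rw [← Finset.sum_sub_distrib]
    refine ge_of_tendsto (x := (genericSet (n + 1) : Filter (Finset ℕ+)))
      (f := fun E => ∑ i ∈ Finset.Icc 1 k, (f i (adel i E) - f i E)) ?_ ?_
    · refine tendsto_finsetSum _ fun i hi => ?_
      rw [Finset.mem_Icc] at hi
      exact ((hc i n).comp (tendsto_adel n i hi.1 (by omega))).sub (hc i (n + 1))
    · filter_upwards [genericSet_spec (n + 1) 1] with E h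
      exact hE E (by omega)
  have hbound : ∀ n, |∑ i ∈ Finset.Icc 1 k, c i n| ≤ k * ‖φ‖ := fun n => by
    refine (Finset.abs_sum_le_sum_abs _ _).trans ?_
    refine (Finset.sum_le_card_nsmul _ _ _ fun i _ => hcB i n).trans ?_
    simp
  have hind : ∀ m : ℕ, m * u ≤
      ∑ i ∈ Finset.Icc 1 k, c i k - ∑ i ∈ Finset.Icc 1 k, c i (k + m) := fun m => by
    induction m with
    | zero => simp
    | succ m ih =>
      have := hstep (k + m) (by omega)
      rw [← add_assoc]
      push_cast
      linarith
  obtain ⟨m, hm⟩ := exists_nat_gt (2 * (k * ‖φ‖) / u)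
  rw [div_lt_iff₀ hu] at hm
  have := hind m
  have h1 := abs_le.1 (hbound k)
  have h2 := abs_le.1 (hbound (k + m))
  linarith [h1.2, h2.1]

lemma defect_apply (k : ℕ) (ν : Finset ℕ+ →₀ ℝ) {i : ℕ} (hi : i ∈ Finset.Icc 1 k)
    (F : Finset ℕ+) :
    (defect k ν : ℕ × Finset ℕ+ → ℝ) (i, F) =
      (∑ E ∈ ν.support.filter (fun E => adel i E = F), ν E) - ν F := by
  have hν : ν F = ∑ E ∈ ν.support, if E = F then ν E else 0 := by
    simp +contextual [eq_comm]
  rw [defect, Finsupp.linearCombination_apply, Finsupp.sum, Finset.sum_filter, hν,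
    ← Finset.sum_sub_distrib, lp.coeFn_sum, Finset.sum_apply]
  refine Finset.sum_congr rfl fun E _ => ?_
  rw [lp.coeFn_smul, Pi.smul_apply, lp.coeFn_sum, Finset.sum_apply, Finset.sum_eq_single i]
  · simp only [lp.coeFn_sub, Pi.sub_apply, lp.coeFn_single, Pi.single_apply, Prod.mk.injEq,
      true_and, smul_eq_mul, mul_sub, mul_ite, mul_one, mul_zero, eq_comm (a := F)]
  · intro j _ hj
    simp [hj.symm]
  · exact fun h => absurd hi h

lemma tsum_abs_le_norm (x : DefectSpace) (i : ℕ) :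
    ∑' F, |(x : ℕ × Finset ℕ+ → ℝ) (i, F)| ≤ ‖x‖ := by
  have hs := (lp.memℓp x).summable (by simp)
  rw [lp.norm_eq_tsum_rpow (by simp)]
  simp only [ENNReal.toReal_one, Real.rpow_one, Real.norm_eq_abs, div_one] at hs ⊢
  exact tsum_comp_le_tsum_of_inj hs (fun _ => abs_nonneg _) (Prod.mk_right_injective i)

/-- Theorem A: for every `k ≥ 2` and `ε > 0` there is a finitely supported probability
distribution `μ` on the finite subsets of `ℕ` with at least `k` elements such that the
pushforward `α_i μ` is `ε`-close to `μ` in total variation for all `1 ≤ i ≤ k`. -/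
theorem stmt_0 (k : ℕ) (hk : 2 ≤ k) (ε : ℝ) (hε : 0 < ε) :
    ∃ (μ : Finset ℕ+ → ℝ) (D : Finset (Finset ℕ+)),
      (∀ E, 0 ≤ μ E) ∧
      (∀ E, μ E ≠ 0 → E ∈ D) ∧
      (∀ E, μ E ≠ 0 → k ≤ E.card) ∧
      (∑ E ∈ D, μ E) = 1 ∧
      ∀ i : ℕ, 1 ≤ i → i ≤ k →
        (1 / 2) * ∑' F : Finset ℕ+,
            |(∑ E ∈ D.filter (fun E => adel i E = F), μ E) - μ F| < ε := by
  obtain ⟨ν, ⟨h0, hcard, hsum⟩, hν⟩ := exists_small_defect k ε hε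
  refine ⟨ν, ν.support, h0, fun E hE => Finsupp.mem_support_iff.2 hE, fun E hE => ?_, ?_,
    fun i h1 hi => ?_⟩
  · by_contra! h
    exact hE (hcard E h)
  · simpa [Finsupp.linearCombination_apply, Finsupp.sum] using hsum
  · have h := tsum_abs_le_norm (defect k ν) i
    simp only [defect_apply k ν (Finset.mem_Icc.2 ⟨h1, hi⟩)] at h
    have := norm_nonneg (defect k ν)
    linarith
end

section
/- The map Φ : 𝒫_pin(ℕ) → 𝒫_fin(ℕ) defined by Φ(E) = [1, max(E)] ∖ E is a bijection, whose inverse sends the empty set to {1} and sends a nonempty finite set F to [1, max(F)+1] ∖ F. -/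
/-!
Let `m` be the greatest element of a pin-headed set `E`. If `m = 1`, then `E = {1}` and
`Φ(E) = ∅`. Otherwise `m = k + 1` with `k ∉ E`, so `k` is the greatest element of
`Φ(E) = [1, m] \ E`: the set `Φ(E)` determines `m`, and complementing in `[1, m]` once more
returns `E`. Conversely, for nonempty `F` with greatest element `k`, the point `k + 1` is the
greatest element of `[1, k + 1] \ F` and `k` is missing from that set. These computations are
`Psi_Phi`, `isPin_Psi` and `Phi_Psi`; bijectivity follows formally.
-/

/-!
STATEMENT 4.  ℕ = {1,2,…} is modelled by `ℕ+`.  A finite set `E ⊆ ℕ+` is pin-headed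
if it is nonempty and `max E − 1 ∉ E` (equivalently, no `x ∈ E` satisfies `x + 1 = max E`).
-/

/-- `E` is pin-headed: nonempty and `max(E) − 1 ∉ E`. -/
def IsPin (E : Finset ℕ+) : Prop :=
  ∃ h : E.Nonempty, ∀ x ∈ E, x + 1 ≠ E.max' h

/-- `Φ(E) = [1, max E] \ E`. -/
def Phi (E : Finset ℕ+) : Finset ℕ+ :=
  if h : E.Nonempty then Finset.Icc 1 (E.max' h) \ E else ∅

/-- The claimed inverse: `∅ ↦ {1}` and `F ↦ [1, max F + 1] \ F` for nonempty `F`. -/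
def Psi (F : Finset ℕ+) : Finset ℕ+ :=
  if h : F.Nonempty then Finset.Icc 1 (F.max' h + 1) \ F else {1}

theorem max'_eq_of_isGreatest {E : Finset ℕ+} {m : ℕ+} (hm : m ∈ E) (hle : ∀ x ∈ E, x ≤ m)
    (h : E.Nonempty) : E.max' h = m :=
  le_antisymm (E.max'_le h m hle) (E.le_max' m hm)

theorem Phi_eq {E : Finset ℕ+} {m : ℕ+} (hm : m ∈ E) (hle : ∀ x ∈ E, x ≤ m) :
    Phi E = Finset.Icc 1 m \ E := by
  have h : E.Nonempty := ⟨m, hm⟩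
  rw [Phi, dif_pos h, max'_eq_of_isGreatest hm hle h]

theorem Psi_eq {F : Finset ℕ+} {m : ℕ+} (hm : m ∈ F) (hle : ∀ x ∈ F, x ≤ m) :
    Psi F = Finset.Icc 1 (m + 1) \ F := by
  have h : F.Nonempty := ⟨m, hm⟩
  rw [Psi, dif_pos h, max'_eq_of_isGreatest hm hle h]

theorem Psi_empty : Psi ∅ = {1} := by simp [Psi]

theorem Icc_one_sdiff_sdiff {E : Finset ℕ+} {m : ℕ+} (hle : ∀ x ∈ E, x ≤ m) :
    Finset.Icc 1 m \ (Finset.Icc 1 m \ E) = E :=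
  Finset.sdiff_sdiff_eq_self fun x hx => Finset.mem_Icc.2 ⟨one_le, hle x hx⟩

theorem Psi_Phi {E : Finset ℕ+} (hE : IsPin E) : Psi (Phi E) = E := by
  obtain ⟨h, hpin⟩ := hE
  have hm := E.max'_mem h
  have hle : ∀ x ∈ E, x ≤ E.max' h := fun x hx => E.le_max' x hx
  generalize E.max' h = m at hm hle hpin
  rw [Phi_eq hm hle]
  rcases eq_or_ne m 1 with rfl | hm1
  · have hE : E = {1} :=
      Finset.eq_singleton_iff_unique_mem.2 ⟨hm, fun x hx => le_antisymm (hle x hx) (one_le)⟩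
    subst hE
    simp [Psi_empty]
  · obtain ⟨k, rfl⟩ := PNat.exists_eq_succ_of_ne_one hm1
    rw [Psi_eq (m := k), Icc_one_sdiff_sdiff hle]
    · exact Finset.mem_sdiff.2 ⟨Finset.mem_Icc.2 ⟨one_le, (PNat.lt_add_right k 1).le⟩,
        fun hk => hpin k hk rfl⟩
    · intro x hx
      obtain ⟨hx1, hx2⟩ := Finset.mem_sdiff.1 hx
      have hne : x ≠ k + 1 := fun e => hx2 (e ▸ hm)
      exact PNat.lt_add_one_iff.1 (lt_of_le_of_ne (Finset.mem_Icc.1 hx1).2 hne)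

/-- If `k` is the greatest element of `F`, then `k + 1` is the greatest element of `Ψ(F)`. -/
theorem isGreatest_Psi {F : Finset ℕ+} {k : ℕ+} (hk : k ∈ F) (hle : ∀ x ∈ F, x ≤ k) :
    k + 1 ∈ Psi F ∧ ∀ x ∈ Psi F, x ≤ k + 1 := by
  rw [Psi_eq hk hle]
  refine ⟨Finset.mem_sdiff.2 ⟨Finset.mem_Icc.2 ⟨one_le, le_rfl⟩, fun h => ?_⟩,
    fun x hx => (Finset.mem_Icc.1 (Finset.mem_sdiff.1 hx).1).2⟩
  exact (PNat.lt_add_right k 1).not_ge (hle _ h)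

theorem isPin_Psi (F : Finset ℕ+) : IsPin (Psi F) := by
  rcases F.eq_empty_or_nonempty with rfl | h
  · rw [Psi_empty]
    refine ⟨Finset.singleton_nonempty 1, fun x _ => ?_⟩
    rw [Finset.max'_singleton]
    exact (PNat.lt_add_left 1 x).ne'
  · have hle : ∀ x ∈ F, x ≤ F.max' h := fun x hx => F.le_max' x hx
    obtain ⟨h1, h2⟩ := isGreatest_Psi (F.max'_mem h) hle
    refine ⟨⟨_, h1⟩, fun x hx hx' => ?_⟩
    replace hx' := hx'.trans (max'_eq_of_isGreatest h1 h2 _)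
    rw [add_right_cancel hx', Psi_eq (F.max'_mem h) hle] at hx
    exact (Finset.mem_sdiff.1 hx).2 (F.max'_mem h)

theorem Phi_Psi (F : Finset ℕ+) : Phi (Psi F) = F := by
  rcases F.eq_empty_or_nonempty with rfl | h
  · rw [Psi_empty, Phi_eq (m := 1) (by simp) (by simp)]
    simp
  · have hle : ∀ x ∈ F, x ≤ F.max' h := fun x hx => F.le_max' x hx
    obtain ⟨h1, h2⟩ := isGreatest_Psi (F.max'_mem h) hle
    rw [Phi_eq h1 h2, Psi_eq (F.max'_mem h) hle]
    exact Icc_one_sdiff_sdiff fun x hx => (hle x hx).trans (PNat.lt_add_right _ 1).le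

/-- `Φ : 𝒫_pin(ℕ) → 𝒫_fin(ℕ)` is a bijection, with inverse `Ψ`. -/
theorem stmt_4 :
    Function.Bijective (fun E : {E : Finset ℕ+ // IsPin E} => Phi E.1) ∧
    (∀ E : Finset ℕ+, IsPin E → Psi (Phi E) = E) ∧
    (∀ F : Finset ℕ+, IsPin (Psi F) ∧ Phi (Psi F) = F) := by
  refine ⟨⟨fun E E' h => Subtype.ext ?_, fun F => ⟨⟨Psi F, isPin_Psi F⟩, Phi_Psi F⟩⟩,
    fun E hE => Psi_Phi hE, fun F => ⟨isPin_Psi F, Phi_Psi F⟩⟩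
  rw [← Psi_Phi E.2, ← Psi_Phi E'.2]
  exact congrArg Psi h
end

section
/- Let i ≥ 1 and let E ⊆ ℕ be a pin-headed finite set with at least i+1 elements. Then α_i(E) is pin-headed and Φ(α_i(E)) = σ_i(Φ(E)), where Φ : 𝒫_pin(ℕ) → 𝒫_fin(ℕ) is the bijection E ↦ [1, max(E)] ∖ E. -/
/-- `σ_i` adjoins to `F` the `i`-th smallest element of `ℕ+ \ F` ("fills the i-th hole"). -/
noncomputable def sigma (i : ℕ) (F : Finset ℕ+) : Finset ℕ+ :=
  insert (Nat.nth (fun n => 0 < n ∧ ∀ x ∈ F, (x : ℕ) ≠ n) (i - 1)).toPNat' F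

/-- The `i`-th smallest element belongs to `E` and has exactly `i - 1` elements of `E` below it;
these two properties determine it. -/
lemma nthSmallest_spec (E : Finset ℕ+) (i : ℕ) (h : i - 1 < E.card) :
    nthSmallest E i ∈ E ∧ (E.filter (· < nthSmallest E i)).card = i - 1 := by
  set e := E.orderEmbOfFin rfl with he
  have ha : nthSmallest E i = e ⟨i - 1, h⟩ := by
    simp [nthSmallest, he, Finset.orderEmbOfFin_apply, h]
  have hf : E.filter (· < nthSmallest E i) = (Finset.Iio ⟨i - 1, h⟩).map e.toEmbedding := by
    ext x
    have hx : x ∈ E ↔ ∃ j, e j = x := by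
      rw [← Set.mem_range, he, Finset.range_orderEmbOfFin, Finset.mem_coe]
    simp only [Finset.mem_filter, hx, ha, Finset.mem_map, Finset.mem_Iio]
    constructor
    · rintro ⟨⟨j, rfl⟩, hj⟩
      exact ⟨j, e.lt_iff_lt.1 hj, rfl⟩
    · rintro ⟨j, hj, rfl⟩
      exact ⟨⟨j, rfl⟩, e.lt_iff_lt.2 hj⟩
  refine ⟨?_, ?_⟩
  · rw [ha]
    exact Finset.orderEmbOfFin_mem E rfl _
  · rw [hf, Finset.card_map, Fin.card_Iio]

lemma mem_Phi {E : Finset ℕ+} (h : E.Nonempty) (x : ℕ+) :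
    x ∈ Phi E ↔ x ≤ E.max' h ∧ x ∉ E := by
  simp [Phi, h]

/-- The `k`-th hole (counting from `0`) of `Φ(E)` is the element of `E` with `k` elements of `E`
below it. -/
lemma nth_hole_Phi {E : Finset ℕ+} {a : ℕ+} {k : ℕ} (ha : a ∈ E)
    (hk : (E.filter (· < a)).card = k) :
    Nat.nth (fun n => 0 < n ∧ ∀ x ∈ Phi E, (x : ℕ) ≠ n) k = a := by
  classical
  have hne : E.Nonempty := ⟨a, ha⟩
  set P : ℕ → Prop := fun n => 0 < n ∧ ∀ x ∈ Phi E, (x : ℕ) ≠ n with hP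
  have hE : ∀ y : ℕ+, y ≤ E.max' hne → (P y ↔ y ∈ E) := by
    intro y hy
    constructor
    · intro h
      by_contra hyE
      exact h.2 y ((mem_Phi hne y).2 ⟨hy, hyE⟩) rfl
    · intro hyE
      refine ⟨y.pos, fun x hx hxy => ?_⟩
      rw [PNat.coe_inj] at hxy
      exact ((mem_Phi hne x).1 hx).2 (hxy ▸ hyE)
  have hc : Nat.count P a = k := by
    rw [Nat.count_eq_card_filter_range, ← hk,
      ← Finset.card_map (⟨_, PNat.coe_injective⟩ : ℕ+ ↪ ℕ)]
    congr 1
    ext n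
    simp only [Finset.mem_filter, Finset.mem_range, Finset.mem_map, Function.Embedding.coeFn_mk]
    constructor
    · rintro ⟨hn, hPn⟩
      lift n to ℕ+ using hPn.1
      have hna : n < a := hn
      exact ⟨n, ⟨(hE n (hna.le.trans (E.le_max' a ha))).1 hPn, hna⟩, rfl⟩
    · rintro ⟨y, ⟨hy, hya⟩, rfl⟩
      exact ⟨hya, (hE y (E.le_max' y hy)).2 hy⟩
  rw [← hc]
  exact Nat.nth_count ((hE a (E.le_max' a ha)).2 ha)

/-- If `E` is pin-headed with at least `i+1` elements (`i ≥ 1`), then `α_i E` is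
pin-headed and `Φ(α_i E) = σ_i(Φ E)`. -/
theorem stmt_5 (i : ℕ) (hi : 1 ≤ i) (E : Finset ℕ+) (hE : IsPin E)
    (hcard : i + 1 ≤ E.card) :
    IsPin (adel i E) ∧ Phi (adel i E) = sigma i (Phi E) := by
  obtain ⟨hne, hpin⟩ := hE
  obtain ⟨haE, hacard⟩ := nthSmallest_spec E i (by omega)
  simp only [adel, sigma]
  rw [nth_hole_Phi haE hacard]
  set a := nthSmallest E i
  -- If `a` were the maximum, all other `card E - 1 ≥ i` elements would lie below it.
  have hamax : E.max' hne ≠ a := by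
    intro h
    have hsub : E.erase a ⊆ E.filter (· < a) := fun x hx =>
      Finset.mem_filter.2 ⟨Finset.mem_of_mem_erase hx,
        lt_of_le_of_ne (h ▸ E.le_max' x (Finset.mem_of_mem_erase hx)) (Finset.ne_of_mem_erase hx)⟩
    have hle := Finset.card_le_card hsub
    rw [Finset.card_erase_of_mem haE] at hle
    omega
  have hmem : E.max' hne ∈ E.erase a := Finset.mem_erase.2 ⟨hamax, E.max'_mem hne⟩
  have hne' : (E.erase a).Nonempty := ⟨_, hmem⟩
  have hmax : (E.erase a).max' hne' = E.max' hne :=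
    le_antisymm (Finset.max'_subset hne' (Finset.erase_subset a E)) (Finset.le_max' _ _ hmem)
  refine ⟨⟨hne', fun x hx => hmax ▸ hpin x (Finset.mem_of_mem_erase hx)⟩, ?_⟩
  ext x
  have hale := E.le_max' a haE
  rw [mem_Phi hne', hmax, PNat.coe_toPNat', Finset.mem_insert, mem_Phi hne, Finset.mem_erase]
  by_cases hx : x = a
  · simp [hx, hale]
  · simp [hx]
end

section
/- There exists a sequence (μ_k)_{k ≥ 1} of means on 𝒫_fin(ℕ) such that the pushforward of μ_{k+1} under σ_i equals μ_k for all k ≥ 1 and all 1 ≤ i ≤ k; that is, μ_{k+1}(f ∘ σ_i) = μ_k(f) for every f ∈ ℓ^∞(𝒫_fin(ℕ)). -/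
/-!
Record a finite set `F` by its holes. If `h` is at least `max F` and is itself a hole, then `F` is
determined by the finite list of its holes up to `h`, and filling the `i`-th hole deletes the
`i`-th smallest entry of that list, as long as this entry is not `h`.

So it suffices to find random increasing tuples `s₁ < ⋯ < s_k` whose law is preserved by deleting
an entry. Iterating a nonprincipal ultrafilter `p` on `ℕ+` does this: the product ultrafilter
(for `p`-most `s₁`, for `p`-most `s₂`, …, for `p`-most `s_k`) is carried to the corresponding one
on `(k-1)`-tuples by deleting any entry (`map_eraseIdx_prodUlt`), and it concentrates on strictly
increasing tuples because `p` is nonprincipal (`eventually_prodUlt`). The mean `μ k` is the limit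
along the image of this ultrafilter on finite sets; it satisfies the required identities exactly.
-/

/-- `f` is a bounded real-valued function, i.e. an element of `ℓ^∞`. -/
def Bdd {X : Type*} (f : X → ℝ) : Prop := ∃ C : ℝ, ∀ x, |f x| ≤ C

/-- A mean on a set `X`: a positive normalized linear functional on `ℓ^∞(X)`
(we represent it as a functional on all functions, constrained only on bounded ones). -/
def IsMean {X : Type*} (ν : (X → ℝ) → ℝ) : Prop :=
  (∀ f g : X → ℝ, Bdd f → Bdd g → ν (f + g) = ν f + ν g) ∧
  (∀ (c : ℝ) (f : X → ℝ), Bdd f → ν (c • f) = c * ν f) ∧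
  (∀ f : X → ℝ, Bdd f → (∀ x, 0 ≤ f x) → 0 ≤ ν f) ∧
  ν (fun _ => 1) = 1


open Filter Topology

/-- The `k`-fold iterated product of a nonprincipal ultrafilter on `ℕ+`, as an ultrafilter on
lists. Lists are written with the last chosen (hence almost surely the largest) entry first. -/
noncomputable def prodUlt : ℕ → Ultrafilter (List ℕ+)
  | 0 => pure []
  | k + 1 => (prodUlt k).bind fun l => (hyperfilter ℕ+).map fun s => s :: l

lemma mem_prodUlt_succ (k : ℕ) (A : Set (List ℕ+)) :
    A ∈ prodUlt (k + 1) ↔ ∀ᶠ l in (prodUlt k : Filter (List ℕ+)),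
      ∀ᶠ s in (hyperfilter ℕ+ : Filter ℕ+), s :: l ∈ A :=
  Iff.rfl

/-- Deleting any entry maps the `(k+1)`-fold product to the `k`-fold product. -/
lemma map_eraseIdx_prodUlt (k j : ℕ) (hj : j ≤ k) :
    (prodUlt (k + 1)).map (fun l => l.eraseIdx j) = prodUlt k := by
  induction k generalizing j with
  | zero =>
    obtain rfl : j = 0 := by omega
    ext A
    rw [Ultrafilter.mem_map, mem_prodUlt_succ]
    simp only [Set.mem_preimage, List.eraseIdx_cons_zero, eventually_const]
    rfl
  | succ k ih =>
    ext A
    rw [Ultrafilter.mem_map, mem_prodUlt_succ]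
    cases j with
    | zero =>
      simp only [Set.mem_preimage, List.eraseIdx_cons_zero, eventually_const]
      rfl
    | succ j =>
      simp only [Set.mem_preimage, List.eraseIdx_cons_succ]
      rw [mem_prodUlt_succ, ← ih j (by omega), Ultrafilter.coe_map, eventually_map]

lemma eventually_gt_hyperfilter (a : ℕ+) : ∀ᶠ s in (hyperfilter ℕ+ : Filter ℕ+), a < s := by
  have h : (Set.Iic a)ᶜ ∈ hyperfilter ℕ+ := (Set.finite_Iic a).compl_mem_hyperfilter
  filter_upwards [h] with s hs
  simpa using hs

lemma eventually_prodUlt (k : ℕ) :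
    ∀ᶠ l in (prodUlt k : Filter (List ℕ+)), l.length = k ∧ l.Pairwise (· > ·) := by
  induction k with
  | zero =>
    change _ ∈ (pure [] : Ultrafilter (List ℕ+))
    simp
  | succ k ih =>
    change _ ∈ prodUlt (k + 1)
    rw [mem_prodUlt_succ]
    filter_upwards [ih] with l hl
    have h : ∀ᶠ s in (hyperfilter ℕ+ : Filter ℕ+), ∀ a ∈ l.toFinset, a < s :=
      (eventually_all_finset _).2 fun a _ => eventually_gt_hyperfilter a
    filter_upwards [h] with s hs
    refine ⟨by simp [hl.1], List.pairwise_cons.2 ⟨fun a ha => hs a (by simpa using ha), hl.2⟩⟩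

/-- For a nonempty strictly decreasing list `l`, the finite set whose holes are the entries of `l`
and everything beyond the head of `l`. The value at `[]` is irrelevant. -/
def complList (l : List ℕ+) : Finset ℕ+ :=
  (Finset.Icc 1 (l.headD 1)).filter fun x => x ∉ l

/-- Filling the hole `a`, which has `l₂.length` smaller holes, deletes `a` from the list. -/
lemma sigma_complList (h a : ℕ+) (t l₂ : List ℕ+)
    (hl : (h :: (t ++ a :: l₂)).Pairwise (· > ·)) :
    sigma (l₂.length + 1) (complList (h :: (t ++ a :: l₂))) = complList (h :: (t ++ l₂)) := by
  classical
  simp only [List.pairwise_cons, List.pairwise_append, List.mem_append, List.mem_cons] at hl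
  obtain ⟨hh, -, ⟨ha2, hp⟩, hta⟩ := hl
  have hah : a < h := hh a (by simp)
  set p : ℕ → Prop :=
    fun n => 0 < n ∧ ∀ x ∈ complList (h :: (t ++ a :: l₂)), (x : ℕ) ≠ n with hpdef
  have hp_iff : ∀ x : ℕ+, x ≤ h → (p x ↔ x ∈ h :: (t ++ a :: l₂)) := by
    intro x hx
    simp only [hpdef, complList, Finset.mem_filter, Finset.mem_Icc, List.headD_cons]
    constructor
    · rintro ⟨-, hx'⟩
      by_contra hc
      exact hx' x ⟨⟨one_le, hx⟩, hc⟩ rfl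
    · rintro hm
      refine ⟨x.pos, ?_⟩
      rintro y ⟨-, hy⟩ hyx
      exact hy (PNat.coe_injective hyx ▸ hm)
  have hcount : Nat.count p a = l₂.length := by
    have hnd : l₂.Nodup := hp.imp fun h => ne_of_gt h
    rw [Nat.count_eq_card_filter_range, ← List.toFinset_card_of_nodup hnd,
      ← Finset.card_image_of_injective l₂.toFinset PNat.coe_injective]
    congr 1
    ext n
    simp only [Finset.mem_filter, Finset.mem_range, Finset.mem_image, List.mem_toFinset]
    constructor
    · rintro ⟨hn, hpn⟩
      lift n to ℕ+ using hpn.1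
      have hna : n < a := by exact_mod_cast hn
      have hm := (hp_iff n (hna.trans hah).le).1 hpn
      simp only [List.mem_append, List.mem_cons] at hm
      rcases hm with rfl | hm | rfl | hm
      · exact absurd hna hah.not_gt
      · exact absurd hna (hta n hm a (Or.inl rfl)).not_gt
      · exact absurd hna (lt_irrefl _)
      · exact ⟨n, hm, rfl⟩
    · rintro ⟨x, hx, rfl⟩
      have hxa : x < a := ha2 x hx
      exact ⟨by exact_mod_cast hxa, (hp_iff x (hxa.trans hah).le).2 (by simp [hx])⟩
  have hnth : Nat.nth p l₂.length = a := by
    rw [← hcount]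
    exact Nat.nth_count ((hp_iff a hah.le).2 (by simp))
  have ha_t : a ∉ t := fun hm => lt_irrefl a (hta a hm a (Or.inl rfl))
  have ha_l : a ∉ l₂ := fun hm => lt_irrefl a (ha2 a hm)
  unfold sigma
  rw [Nat.add_sub_cancel, ← hpdef, hnth, PNat.coe_toPNat']
  ext x
  simp only [complList, Finset.mem_insert, Finset.mem_filter, Finset.mem_Icc, List.headD_cons,
    List.mem_cons, List.mem_append]
  by_cases hx : x = a
  · subst hx
    simp [hah.le, hah.ne, ha_t, ha_l]
  · simp [hx]

lemma sigma_complList_eraseIdx (k i : ℕ) (hi : 1 ≤ i) (hik : i ≤ k) (l : List ℕ+)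
    (hlen : l.length = k + 1) (hl : l.Pairwise (· > ·)) :
    sigma i (complList l) = complList (l.eraseIdx (k + 1 - i)) := by
  obtain ⟨j, rfl⟩ : ∃ j, k = j + i := ⟨k - i, by omega⟩
  rw [show j + i + 1 - i = j + 1 by omega]
  match l, hlen, hl with
  | h :: m, hlen, hl =>
    have hlen' : m.length = j + i := by simpa using hlen
    have hj : j < m.length := by omega
    have hm : m = m.take j ++ m[j] :: m.drop (j + 1) := by simp
    have he : m.eraseIdx j = m.take j ++ m.drop (j + 1) := List.eraseIdx_eq_take_drop_succ ..
    rw [List.eraseIdx_cons_succ, he]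
    have key := sigma_complList h m[j] (m.take j) (m.drop (j + 1)) (by rwa [← hm])
    rw [← hm] at key
    rwa [List.length_drop, show m.length - (j + 1) + 1 = i by omega] at key

/-- The image of the `k`-fold product ultrafilter on finite subsets of `ℕ+`. -/
noncomputable def finUlt (k : ℕ) : Ultrafilter (Finset ℕ+) := (prodUlt k).map complList

lemma map_sigma_finUlt (k i : ℕ) (hi : 1 ≤ i) (hik : i ≤ k) :
    map (sigma i) (finUlt (k + 1) : Filter (Finset ℕ+)) = finUlt k := by
  have h := congrArg (fun U : Ultrafilter (List ℕ+) => (U : Filter (List ℕ+)))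
    (map_eraseIdx_prodUlt k (k + 1 - i) (by omega))
  simp only [Ultrafilter.coe_map] at h
  simp only [finUlt, Ultrafilter.coe_map]
  rw [← h, map_map, map_map]
  apply Filter.map_congr
  filter_upwards [eventually_prodUlt (k + 1)] with l hl
  exact sigma_complList_eraseIdx k i hi hik l hl.1 hl.2

lemma tendsto_limUnder_of_bdd {X : Type*} [Nonempty X] (U : Ultrafilter X) (f : X → ℝ)
    (hf : Bdd f) : Tendsto f U (𝓝 (limUnder (U : Filter X) f)) := by
  obtain ⟨C, hC⟩ := hf
  apply tendsto_nhds_limUnder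
  obtain ⟨x, -, hx⟩ := (isCompact_Icc (a := -C) (b := C)).ultrafilter_le_nhds (U.map f)
    (tendsto_principal.2 (Eventually.of_forall fun x => abs_le.1 (hC x)))
  exact ⟨x, hx⟩

lemma isMean_limUnder {X : Type*} [Nonempty X] (U : Ultrafilter X) :
    IsMean fun f : X → ℝ => limUnder (U : Filter X) f := by
  refine ⟨fun f g hf hg => ?_, fun c f hf => ?_, fun f hf h0 => ?_, ?_⟩
  · exact ((tendsto_limUnder_of_bdd U f hf).add (tendsto_limUnder_of_bdd U g hg)).limUnder_eq
  · exact ((tendsto_limUnder_of_bdd U f hf).const_mul c).limUnder_eq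
  · exact ge_of_tendsto' (tendsto_limUnder_of_bdd U f hf) h0
  · exact tendsto_const_nhds.limUnder_eq

/-- There is a sequence `(μ_k)_{k ≥ 1}` of means on the finite subsets of `ℕ = {1,2,…}`
such that the pushforward of `μ_{k+1}` under `σ_i` is `μ_k` for all `1 ≤ i ≤ k`. -/
theorem stmt_7 :
    ∃ μ : ℕ → ((Finset ℕ+ → ℝ) → ℝ),
      (∀ k, 1 ≤ k → IsMean (μ k)) ∧
      ∀ k i : ℕ, 1 ≤ k → 1 ≤ i → i ≤ k →
        ∀ f : Finset ℕ+ → ℝ, Bdd f → μ (k + 1) (fun F => f (sigma i F)) = μ k f := by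
  refine ⟨fun k f => limUnder (finUlt k : Filter (Finset ℕ+)) f,
    fun k _ => isMean_limUnder (finUlt k), fun k i _ hi hik f _ => ?_⟩
  simp only [limUnder]
  rw [← map_sigma_finUlt k i hi hik, map_map]
  rfl
end

section
/- Every element of the monoid S admits a unique representative in flat normal form: the map sending a finite subset {i_1 < i_2 < ⋯ < i_n} of ℕ to the product s_{i_1} s_{i_2} ⋯ s_{i_n} in S (and the empty set to the identity) is a bijection from 𝒫_fin(ℕ) onto S. -/
/-!
The relation `s_j s_i = s_i s_{j+1}` (`i ≤ j`) tells how to bring `s_j` times a flat normal form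
back to flat normal form: push `s_j` to the right past every smaller-or-equal letter, raising its
index by one each time. This insertion `ins j` is defined on all words, and it satisfies
`ins j ∘ ins i = ins i ∘ ins (j + 1)` for `i ≤ j` (`ins_ins`), so `S` acts on words by insertion.
(On a strictly increasing word, `ins j` adds the `j`-th element of the complement.)

Acting on the empty word, the product of a strictly increasing word gives back that word, whence
injectivity. Since insertion preserves strict monotonicity (`pairwise_ins`) and realises left
multiplication by a generator (`prod_ins`), every product of generators has a flat normal form,
whence surjectivity.
-/


/-- The defining relations of the facial monoid `S`:
`s_j s_i = s_i s_{j+1}` for all `1 ≤ i ≤ j` (indices in `ℕ = {1,2,…}`, modelled by `ℕ+`). -/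
def faceRel : FreeMonoid ℕ+ → FreeMonoid ℕ+ → Prop := fun a b =>
  ∃ i j : ℕ+, i ≤ j ∧ a = FreeMonoid.of j * FreeMonoid.of i ∧
    b = FreeMonoid.of i * FreeMonoid.of (j + 1)

/-- The facial monoid `S = ⟨ s_i : s_j s_i = s_i s_{j+1} ∀ 1 ≤ i ≤ j ⟩`. -/
abbrev S : Type := (conGen faceRel).Quotient

/-- The generator `s_i` of `S`. -/
def s (i : ℕ+) : S := Con.mk' (conGen faceRel) (FreeMonoid.of i)

/-- Insertion of a letter on the left of a word of indices: the letter `j` moves to the right past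
each letter `a ≤ j`, its index being raised by one each time, and stops before the first letter
that exceeds it. -/
def ins : ℕ+ → List ℕ+ → List ℕ+
  | j, [] => [j]
  | j, a :: l => if j < a then j :: a :: l else a :: ins (j + 1) l

/-- Insertion respects the defining relations of `S`. -/
theorem ins_ins (l : List ℕ+) (i j : ℕ+) (h : i ≤ j) :
    ins j (ins i l) = ins i (ins (j + 1) l) := by
  induction l generalizing i j with
  | nil =>
    have h1 : ¬ j < i := not_lt.mpr h
    have h2 : i < j + 1 := PNat.lt_add_one_iff.mpr h
    simp [ins, h1, h2]
  | cons a l ih =>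
    have h1 : ¬ j < i := not_lt.mpr h
    have h2 : i < j + 1 := PNat.lt_add_one_iff.mpr h
    by_cases hi : i < a
    · by_cases hj : j + 1 < a <;> simp [ins, h1, h2, hi, hj]
    · have hj : ¬ j < a := fun hj => hi (lt_of_le_of_lt h hj)
      have hj' : ¬ j + 1 < a := fun hj' => hi (h2.trans hj')
      simp [ins, hi, hj, hj', ih (i + 1) (j + 1) (by gcongr)]

theorem s_mul_s (i j : ℕ+) (h : i ≤ j) : s j * s i = s i * s (j + 1) :=
  (Con.eq _).mpr (ConGen.Rel.of _ _ ⟨i, j, h, rfl, rfl⟩)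

/-- Insertion realises left multiplication by a generator. -/
theorem prod_ins (l : List ℕ+) (j : ℕ+) : ((ins j l).map s).prod = s j * (l.map s).prod := by
  induction l generalizing j with
  | nil => simp [ins]
  | cons a l ih =>
    by_cases h : j < a
    · simp [ins, h]
    · simp [ins, h, ih, ← mul_assoc, s_mul_s a j (not_lt.mp h)]

theorem lt_of_mem_ins (l : List ℕ+) (b j : ℕ+) (hj : b < j) (hl : ∀ x ∈ l, b < x) :
    ∀ x ∈ ins j l, b < x := by
  induction l generalizing j with
  | nil => simpa [ins] using hj
  | cons a l ih =>
    by_cases h : j < a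
    · simpa [ins, h] using ⟨hj, by simpa using hl⟩
    · simp only [ins, h, if_false, List.forall_mem_cons] at hl ⊢
      exact ⟨hl.1, ih (j + 1) (hj.trans (PNat.lt_add_right j 1)) hl.2⟩

theorem pairwise_ins (l : List ℕ+) (j : ℕ+) (hl : l.Pairwise (· < ·)) :
    (ins j l).Pairwise (· < ·) := by
  induction l generalizing j with
  | nil => simp [ins]
  | cons a l ih =>
    have hl' := List.pairwise_cons.mp hl
    by_cases h : j < a
    · simp only [ins, h, if_true]
      refine List.pairwise_cons.mpr ⟨?_, hl⟩
      exact List.forall_mem_cons.mpr ⟨h, fun x hx => h.trans (hl'.1 x hx)⟩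
    · simp only [ins, h, if_false]
      exact List.pairwise_cons.mpr ⟨lt_of_mem_ins l a (j + 1)
        (PNat.lt_add_one_iff.mpr (not_lt.mp h)) hl'.1, ih (j + 1) hl'.2⟩

/-- The left action of `S` on words of indices in which `s j` acts by `ins j`. -/
def insAction : S →* Function.End (List ℕ+) :=
  (conGen faceRel).lift (FreeMonoid.lift (fun j => (ins j : Function.End (List ℕ+)))) <| by
    refine Con.conGen_le.mpr ?_
    rintro _ _ ⟨i, j, h, rfl, rfl⟩
    funext l
    exact ins_ins l i j h

theorem insAction_s (j : ℕ+) : insAction (s j) = ins j := rfl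

theorem insAction_prod (l : List ℕ+) (hl : l.Pairwise (· < ·)) :
    insAction (l.map s).prod [] = l := by
  induction l with
  | nil => rw [List.map_nil, List.prod_nil, map_one]; rfl
  | cons a l ih =>
    have hl' := List.pairwise_cons.mp hl
    rw [List.map_cons, List.prod_cons, map_mul, insAction_s]
    change ins a (insAction (l.map s).prod []) = a :: l
    rw [ih hl'.2]
    cases l with
    | nil => rfl
    | cons b l => simp [ins, hl'.1 b (by simp)]

/-- Flat normal forms: the map sending a finite subset `{i_1 < ⋯ < i_n}` of `ℕ = {1,2,…}`
to `s_{i_1} ⋯ s_{i_n} ∈ S` (and `∅` to the identity) is a bijection. -/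
theorem stmt_9 :
    Function.Bijective (fun E : Finset ℕ+ => ((E.sort (· ≤ ·)).map s).prod) := by
  constructor
  · intro E F h
    have h' := congrArg (fun x => insAction x []) h
    simp only [insAction_prod _ (Finset.sortedLT_sort _).pairwise] at h'
    rw [← Finset.sort_toFinset E (· ≤ ·), h', Finset.sort_toFinset]
  · intro x
    suffices h : ∃ l : List ℕ+, l.Pairwise (· < ·) ∧ (l.map s).prod = x by
      obtain ⟨l, hl, rfl⟩ := h
      refine ⟨l.toFinset, ?_⟩
      have hs : l.toFinset.sort (· ≤ ·) = l :=
        (List.toFinset_sort (· ≤ ·) (hl.imp ne_of_lt)).mpr (hl.imp le_of_lt)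
      simp only [hs]
    obtain ⟨w, rfl⟩ := Con.mk'_surjective x
    induction w using FreeMonoid.inductionOn' with
    | one => exact ⟨[], List.Pairwise.nil, by simp⟩
    | of_mul j w ih =>
      obtain ⟨l, hl, h⟩ := ih
      exact ⟨ins j l, pairwise_ins l j hl, by rw [prod_ins, h, map_mul]; rfl⟩
end

section
/- For every n ≥ 2, the monoid S_n admits no left-invariant mean: there is no linear functional m on the space of bounded real-valued functions on S_n that is positive, normalized (m(1) = 1), and satisfies m(x ↦ f(s·x)) = m(f) for every s ∈ S_n and every bounded f : S_n → ℝ. -/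
/-- The submonoid `S_n ≤ S` generated by `s_1, …, s_n`. -/
def Sn (n : ℕ+) : Submonoid S :=
  Submonoid.closure {x : S | ∃ i : ℕ+, i ≤ n ∧ x = s i}

/-- The coface map `δ_i : ℕ → ℕ`, the increasing map whose image omits exactly `i`. -/
def coface (i : ℕ+) : Function.End ℕ := fun k => if k < (i : ℕ) then k else k + 1

/-- The right action of `S` on `ℕ` in which `s_i` acts by `δ_i`, as a homomorphism to the opposite
of the monoid of self-maps of `ℕ`. -/
def gapHom : S →* (Function.End ℕ)ᵐᵒᵖ :=
  Con.lift (conGen faceRel) (FreeMonoid.lift fun i => MulOpposite.op (coface i)) <| by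
    refine Con.conGen_le.2 ?_
    rintro a b ⟨i, j, hij, rfl, rfl⟩
    have h : (i : ℕ) ≤ j := hij
    simp only [Con.ker_rel, map_mul, FreeMonoid.lift_eval_of, ← MulOpposite.op_mul]
    congr 1
    funext k
    change coface i (coface j k) = coface (j + 1) (coface i k)
    simp only [coface, PNat.add_coe, PNat.one_coe]
    grind

/-- The map `g_x : ℕ → ℕ` by which `x` acts. For `k ≥ 1`, its value at `k` is the `k`-th smallest
positive integer in its image. -/
def gap (x : S) : ℕ → ℕ := (gapHom x).unop

lemma gap_one (k : ℕ) : gap 1 k = k := by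
  simp only [gap, map_one]; rfl

lemma gap_mul (x y : S) (k : ℕ) : gap (x * y) k = gap y (gap x k) := by
  simp only [gap, map_mul]; rfl

lemma gap_s (i : ℕ+) (k : ℕ) : gap (s i) k = if k < (i : ℕ) then k else k + 1 := rfl

lemma gap_of_mem_Sn {n : ℕ+} {x : S} (hx : x ∈ Sn n) :
    StrictMono (gap x) ∧ ∀ k : ℕ, (n : ℕ) ≤ k → gap x (k + 1) = gap x k + 1 := by
  refine Submonoid.closure_induction (motive := fun x _ => StrictMono (gap x) ∧
    ∀ k : ℕ, (n : ℕ) ≤ k → gap x (k + 1) = gap x k + 1) ?_ ?_ ?_ hx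
  · rintro _ ⟨i, hi, rfl⟩
    have h : (i : ℕ) ≤ n := hi
    refine ⟨fun a b hab => ?_, fun k hk => ?_⟩
    · simp only [gap_s]; grind
    · simp only [gap_s]; grind
  · exact ⟨fun a b hab => by simpa only [gap_one] using hab, fun k _ => by simp only [gap_one]⟩
  · rintro x y - - ⟨hx, hx'⟩ ⟨hy, hy'⟩
    refine ⟨fun a b hab => ?_, fun k hk => ?_⟩
    · simpa only [gap_mul] using hy (hx hab)
    · rw [gap_mul, gap_mul, hx' k hk, hy' _ (hk.trans hx.le_apply)]

lemma gap_s_one_pow (m k : ℕ) (hk : 1 ≤ k) : gap (s 1 ^ m) k = k + m := by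
  induction m with
  | zero => simp [gap_one]
  | succ m ih => rw [pow_succ, gap_mul, ih, gap_s, PNat.one_coe]; grind

/-- For `n ≥ 2`, the monoid `S_n` admits no left-invariant mean: there is no positive
normalized linear functional on the bounded functions on `S_n` invariant under all left
translations. -/
theorem stmt_12 (n : ℕ+) (hn : 2 ≤ n) :
    ¬ ∃ m : ((Sn n) → ℝ) → ℝ,
      (∀ f g : (Sn n) → ℝ, Bdd f → Bdd g → m (f + g) = m f + m g) ∧
      (∀ (c : ℝ) (f : (Sn n) → ℝ), Bdd f → m (c • f) = c * m f) ∧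
      (∀ f : (Sn n) → ℝ, Bdd f → (∀ x, 0 ≤ f x) → 0 ≤ m f) ∧
      m (fun _ => 1) = 1 ∧
      (∀ (t : Sn n) (f : (Sn n) → ℝ), Bdd f →
        m (fun x => f (t * x)) = m f) := by
  rintro ⟨m, -, hsmul, -, hone, hinv⟩
  let f : Sn n → ℝ := fun x => if gap x 2 = gap x 1 + 1 then 1 else 0
  have hf : Bdd f := ⟨1, fun x => by dsimp only [f]; split_ifs <;> simp⟩
  let t₁ : Sn n := ⟨s 1, Submonoid.subset_closure ⟨1, one_le, rfl⟩⟩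
  let t₂ : Sn n := ⟨s 2, Submonoid.subset_closure ⟨2, hn, rfl⟩⟩
  have h₁ : (fun x => f (t₁ ^ (n : ℕ) * x)) = fun _ => 1 := by
    funext x
    refine if_pos ?_
    change gap (s 1 ^ (n : ℕ) * (x : S)) 2 = gap (s 1 ^ (n : ℕ) * (x : S)) 1 + 1
    rw [gap_mul, gap_mul, gap_s_one_pow _ _ (by norm_num), gap_s_one_pow _ _ le_rfl,
      ← (gap_of_mem_Sn x.2).2 _ (by omega)]
    congr 1
    omega
  have h₂ : (fun x => f (t₂ * x)) = (0 : ℝ) • f := by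
    funext x
    rw [zero_smul]
    refine if_neg ?_
    change ¬ gap (s 2 * (x : S)) 2 = gap (s 2 * (x : S)) 1 + 1
    have e1 : gap (s 2) 1 = 1 := rfl
    have e2 : gap (s 2) 2 = 3 := rfl
    rw [gap_mul, gap_mul, e1, e2]
    have a := (gap_of_mem_Sn x.2).1 (show 1 < 2 by norm_num)
    have b := (gap_of_mem_Sn x.2).1 (show 2 < 3 by norm_num)
    omega
  have e₁ := hinv (t₁ ^ (n : ℕ)) f hf
  have e₂ := hinv t₂ f hf
  rw [h₁, hone] at e₁
  rw [h₂, hsmul 0 f hf, zero_mul] at e₂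
  linarith
end

section
/- Let (X, Σ) be a measurable space, let Ω = X^ℕ with the product σ-algebra, and let s_i : Ω → Ω (i ∈ ℕ) be the deletion maps. Let μ be a probability measure on Ω that is invariant (μ(s_i^{-1}E) = μ(E) for every measurable E ⊆ Ω and every i) and ergodic (every measurable E ⊆ Ω with s_i^{-1}E = E for all i satisfies μ(E) ∈ {0,1}). Then μ is an IID measure: there exists a probability measure η on (X, Σ) such that μ = η^ℕ, the countable product measure. -/
/-!
The deletion map `s_1` is the shift `T`. The face relation `s_i ∘ s_1 = s_1 ∘ s_{i+1}` shows that a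
set which is invariant under `T` alone is invariant under every `s_i`, so `μ` is ergodic for `T` in
the usual sense (`ergodic_sdel_one`).

Let `E` be a cylinder event that depends only on coordinates `< m`, and let `B = {ω_m ∈ A}`. Since
`s_m` leaves the coordinates below `m` alone and moves the others by one, invariance under `s_m`
shows that `μ (E ∩ T⁻ⁿ B)` does not depend on `n`. By the mean ergodic theorem the averages over `n`
of the indicators of `T⁻ⁿ B` converge in `L²` to a `T`-invariant function, which by ergodicity is
the constant `μ B`. Pairing with the indicator of `E` gives `μ (E ∩ B) = μ E * μ B`
(`measure_inter_eq_mul_of_const`). The product formula follows by induction on the set of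
coordinates, adding its maximum each time.
-/

open MeasureTheory

/-- The deletion map `s_i : X^ℕ → X^ℕ` (ℕ = {1,2,…} is modelled by `ℕ+`):
`(s_i ω)_n = ω_n` for `n < i` and `(s_i ω)_n = ω_{n+1}` for `n ≥ i`. -/
def sdel {X : Type*} (i : ℕ+) (ω : ℕ+ → X) : ℕ+ → X :=
  fun n => if n < i then ω n else ω (n + 1)

lemma sdel_of_lt {X : Type*} {i n : ℕ+} (h : n < i) (ω : ℕ+ → X) : sdel i ω n = ω n := if_pos h

lemma sdel_of_le {X : Type*} {i n : ℕ+} (h : i ≤ n) (ω : ℕ+ → X) : sdel i ω n = ω (n + 1) :=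
  if_neg (not_lt.2 h)

lemma sdel_one_apply {X : Type*} (ω : ℕ+ → X) (n : ℕ+) : sdel 1 ω n = ω (n + 1) :=
  sdel_of_le one_le ω

lemma measurable_sdel {X : Type*} [MeasurableSpace X] (i : ℕ+) :
    Measurable (sdel i : (ℕ+ → X) → ℕ+ → X) := by
  refine measurable_pi_lambda _ fun n => ?_
  unfold sdel
  split_ifs <;> exact measurable_pi_apply _

/-- The face relation `s_i ∘ s_1 = s_1 ∘ s_{i+1}`. -/
lemma sdel_sdel_one {X : Type*} (i : ℕ+) (ω : ℕ+ → X) :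
    sdel i (sdel 1 ω) = sdel 1 (sdel (i + 1) ω) := by
  funext n
  rw [sdel_one_apply]
  rcases lt_or_ge n i with h | h
  · rw [sdel_of_lt h, sdel_one_apply, sdel_of_lt (add_lt_add_left h 1)]
  · rw [sdel_of_le h, sdel_one_apply, sdel_of_le (add_le_add_left h 1)]

lemma preimage_sdel_eq_of_one {X : Type*} {E : Set (ℕ+ → X)} (hE : sdel 1 ⁻¹' E = E) (i : ℕ+) :
    sdel i ⁻¹' E = E := by
  induction i using PNat.recOn with
  | one => exact hE
  | succ i ih =>
    ext ω
    have key : ∀ ω', sdel 1 ω' ∈ E ↔ ω' ∈ E := fun ω' => Set.ext_iff.1 hE ω'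
    have ih' : ∀ ω', sdel i ω' ∈ E ↔ ω' ∈ E := fun ω' => Set.ext_iff.1 ih ω'
    rw [Set.mem_preimage, ← key, ← sdel_sdel_one, ih', key]

/-- From position `m` on, deleting the `m`-th coordinate is the same as shifting. -/
lemma iterate_sdel_one_sdel {X : Type*} (m : ℕ+) (n : ℕ) (ω : ℕ+ → X) :
    ∀ k, m ≤ k → (sdel 1)^[n] (sdel m ω) k = (sdel 1)^[n + 1] ω k := by
  induction n with
  | zero =>
    intro k hk
    rw [Function.iterate_zero_apply, sdel_of_le hk]
    exact (sdel_one_apply ω k).symm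
  | succ n ih =>
    intro k hk
    rw [Function.iterate_succ_apply', sdel_one_apply, Function.iterate_succ_apply',
      sdel_one_apply, ih _ (hk.trans (PNat.lt_add_right k 1).le)]

lemma ergodic_sdel_one {X : Type*} [MeasurableSpace X]
    (μ : Measure (ℕ+ → X)) [IsProbabilityMeasure μ]
    (hinv : ∀ (i : ℕ+) (E : Set (ℕ+ → X)), MeasurableSet E → μ (sdel i ⁻¹' E) = μ E)
    (herg : ∀ E : Set (ℕ+ → X), MeasurableSet E →
      (∀ i : ℕ+, sdel i ⁻¹' E = E) → μ E = 0 ∨ μ E = 1) :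
    Ergodic (sdel 1) μ where
  measurable := measurable_sdel 1
  map_eq := by
    ext E hE
    rw [Measure.map_apply (measurable_sdel 1) hE, hinv 1 E hE]
  aeconst_set := fun E hE hE1 => by
    rw [Filter.eventuallyConst_set']
    rcases herg E hE (preimage_sdel_eq_of_one hE1) with h | h
    · exact Or.inl (ae_eq_empty.2 h)
    · exact Or.inr (ae_eq_univ.2 ((prob_compl_eq_zero_iff hE).2 h))

/-- If `T` is ergodic and `μ (E ∩ T⁻ⁿ B)` does not depend on `n`, then `E` and `B` are independent:
a consequence of the mean ergodic theorem. -/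
lemma measure_inter_eq_mul_of_const {Ω : Type*} [MeasurableSpace Ω] {μ : Measure Ω}
    [IsProbabilityMeasure μ] {T : Ω → Ω} (hT : Ergodic T μ) {E B : Set Ω}
    (hE : MeasurableSet E) (hB : MeasurableSet B)
    (h : ∀ n : ℕ, μ (E ∩ T^[n] ⁻¹' B) = μ (E ∩ B)) : μ (E ∩ B) = μ E * μ B := by
  have hmp : MeasurePreserving T μ μ := hT.toMeasurePreserving
  let U : Lp ℝ 2 μ →L[ℝ] Lp ℝ 2 μ :=
    (Lp.compMeasurePreservingₗᵢ ℝ T hmp).toContinuousLinearMap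
  have hU : ‖U‖ ≤ 1 := LinearIsometry.norm_toContinuousLinearMap_le _
  let v : Lp ℝ 2 μ := indicatorConstLp 2 hB (measure_ne_top μ B) 1
  have hiter : ∀ n : ℕ, U^[n] v =
      indicatorConstLp 2 (hmp.measurable.iterate n hB) (measure_ne_top μ _) 1 := by
    intro n
    have : (U : Lp ℝ 2 μ → Lp ℝ 2 μ)^[n] = Lp.compMeasurePreserving T^[n] (hmp.iterate n) := by
      rw [← Lp.compMeasurePreserving_iterate]; rfl
    rw [this]
    exact Lp.indicatorConstLp_compMeasurePreserving hB (measure_ne_top μ B) 1 (hmp.iterate n)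
  obtain ⟨w, hw⟩ : ∃ w, w = (U.eqLocus (1 : Lp ℝ 2 μ →L[ℝ] Lp ℝ 2 μ)).orthogonalProjectionOnto v :=
    ⟨_, rfl⟩
  have hlim := U.tendsto_birkhoffAverage_orthogonalProjection hU v
  rw [← hw] at hlim
  have hUw : U w = w := w.2
  -- Pairing with an indicator of constant correlation identifies the integral of the limit.
  have hpair : ∀ F : Set Ω, MeasurableSet F →
      (∀ n : ℕ, μ (F ∩ T^[n] ⁻¹' B) = μ (F ∩ B)) →
      ∫ x in F, (w : Lp ℝ 2 μ) x ∂μ = μ.real (F ∩ B) := by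
    intro F hF hc
    rw [← L2.inner_indicatorConstLp_one hF (measure_ne_top μ F)]
    refine tendsto_nhds_unique ((tendsto_const_nhds (x := indicatorConstLp 2 hF
      (measure_ne_top μ F) (1 : ℝ))).inner hlim) ?_
    refine tendsto_const_nhds.congr' ?_
    filter_upwards [Filter.eventually_ne_atTop 0] with N hN
    have hterm : ∀ n : ℕ, inner ℝ (indicatorConstLp 2 hF (measure_ne_top μ F) (1 : ℝ)) (U^[n] v)
        = μ.real (F ∩ B) := fun n => by
      rw [hiter, L2.real_inner_indicatorConstLp_one_indicatorConstLp_one, Measure.real, hc n,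
        Measure.real]
    have hN' : (N : ℝ) ≠ 0 := Nat.cast_ne_zero.2 hN
    simp only [birkhoffAverage, birkhoffSum, id, inner_smul_right, inner_sum, hterm,
      Finset.sum_const, Finset.card_range, nsmul_eq_mul]
    field_simp
  obtain ⟨c, hc⟩ : ∃ c : ℝ, (w : Lp ℝ 2 μ) =ᵐ[μ] Function.const Ω c := by
    refine hT.ae_eq_const_of_ae_eq_comp_ae (Lp.aestronglyMeasurable _) ?_
    exact (Lp.coeFn_compMeasurePreserving (w : Lp ℝ 2 μ) hmp).symm.trans
      (Filter.EventuallyEq.of_eq (congrArg (fun f : Lp ℝ 2 μ => (f : Ω → ℝ)) hUw))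
  have hint : ∀ F : Set Ω, ∫ x in F, (w : Lp ℝ 2 μ) x ∂μ = μ.real F * c := fun F => by
    rw [integral_congr_ae (ae_restrict_of_ae hc)]
    simp
  -- Taking the whole space shows that the constant is `μ B`.
  have hcB : c = μ.real B := by
    have := hpair Set.univ MeasurableSet.univ fun n => by
      simpa using (hmp.iterate n).measure_preimage hB.nullMeasurableSet
    rw [hint] at this
    simpa using this
  have hfin : μ.real (E ∩ B) = μ.real E * μ.real B := by
    rw [← hpair E hE h, hint, hcB]
  rw [← ENNReal.toReal_eq_toReal_iff' (measure_ne_top _ _)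
    (ENNReal.mul_ne_top (measure_ne_top _ _) (measure_ne_top _ _)), ENNReal.toReal_mul]
  exact hfin

/-- De Finetti-type theorem: an invariant ergodic probability measure on `X^ℕ` for the
deletion maps is IID, i.e. it agrees with a countable product measure `η^ℕ`
(equality of measures on the product σ-algebra being expressed by equality on all
finite-dimensional cylinder sets, which determine the product measure). -/
theorem stmt_15 {X : Type*} [MeasurableSpace X]
    (μ : Measure (ℕ+ → X)) [IsProbabilityMeasure μ]
    (hinv : ∀ (i : ℕ+) (E : Set (ℕ+ → X)), MeasurableSet E → μ (sdel i ⁻¹' E) = μ E)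
    (herg : ∀ E : Set (ℕ+ → X), MeasurableSet E →
      (∀ i : ℕ+, sdel i ⁻¹' E = E) → μ E = 0 ∨ μ E = 1) :
    ∃ η : Measure X, IsProbabilityMeasure η ∧
      ∀ (J : Finset ℕ+) (A : ℕ+ → Set X), (∀ i ∈ J, MeasurableSet (A i)) →
        μ {ω | ∀ i ∈ J, ω i ∈ A i} = ∏ i ∈ J, η (A i) := by
  have hT := ergodic_sdel_one μ hinv herg
  refine ⟨μ.map (fun ω => ω 1), Measure.isProbabilityMeasure_map
    (measurable_pi_apply 1).aemeasurable, ?_⟩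
  have hmarg : ∀ (m : ℕ+) (A : Set X), MeasurableSet A →
      μ {ω | ω m ∈ A} = μ.map (fun ω => ω 1) A := by
    intro m A hA
    rw [Measure.map_apply (measurable_pi_apply 1) hA]
    induction m using PNat.recOn with
    | one => rfl
    | succ m ih =>
      rw [← ih, ← hinv 1 {ω | ω m ∈ A} (measurable_pi_apply m hA)]
      simp only [Set.preimage_ofPred_eq, sdel_one_apply]
  intro J A
  induction J using Finset.induction_on_max with
  | empty => intro _; simp
  | insert m J hJ ih =>
    intro hA
    have hAm : MeasurableSet (A m) := hA m (Finset.mem_insert_self m J)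
    have hAJ : ∀ i ∈ J, MeasurableSet (A i) := fun i hi => hA i (Finset.mem_insert_of_mem hi)
    have hE : MeasurableSet {ω : ℕ+ → X | ∀ i ∈ J, ω i ∈ A i} := by
      have : {ω : ℕ+ → X | ∀ i ∈ J, ω i ∈ A i} = ⋂ i ∈ J, (fun ω => ω i) ⁻¹' A i := by
        ext ω; simp
      rw [this]
      exact J.measurableSet_biInter fun i hi => measurable_pi_apply i (hAJ i hi)
    have hB : MeasurableSet {ω : ℕ+ → X | ω m ∈ A m} := measurable_pi_apply m hAm
    have hset : {ω : ℕ+ → X | ∀ i ∈ insert m J, ω i ∈ A i} =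
        {ω | ∀ i ∈ J, ω i ∈ A i} ∩ {ω | ω m ∈ A m} := by
      ext ω; simp [and_comm]
    have hconst : ∀ n : ℕ, μ ({ω : ℕ+ → X | ∀ i ∈ J, ω i ∈ A i} ∩
        (sdel 1)^[n] ⁻¹' {ω | ω m ∈ A m}) =
        μ ({ω | ∀ i ∈ J, ω i ∈ A i} ∩ {ω | ω m ∈ A m}) := by
      intro n
      induction n with
      | zero => rfl
      | succ n ihn =>
        rw [← ihn, ← hinv m _ (hE.inter ((measurable_sdel 1).iterate n hB))]
        congr 1
        ext ω
        simp only [Set.mem_inter_iff, Set.mem_preimage, Set.mem_ofPred_eq,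
          iterate_sdel_one_sdel m n ω m le_rfl]
        refine and_congr_left fun _ => forall₂_congr fun i hi => ?_
        rw [sdel_of_lt (hJ i hi)]
    rw [hset, measure_inter_eq_mul_of_const hT hE hB hconst, ih hAJ, hmarg m _ hAm,
      Finset.prod_insert fun hm => lt_irrefl m (hJ m hm), mul_comm]
end

section
/- Let (Θ, Σ, μ) be a probability space and let s_i : Θ → Θ (i ∈ ℕ) be measure-preserving measurable transformations satisfying the face relations s_j ∘ s_i = s_i ∘ s_{j+1} for all 1 ≤ i ≤ j. Suppose μ is ergodic for the family: every measurable E ⊆ Θ with s_i^{-1}E = E for all i satisfies μ(E) ∈ {0,1}. Then μ is s_1-ergodic: every measurable E ⊆ Θ with s_1^{-1}E = E satisfies μ(E) ∈ {0,1}. -/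
open MeasureTheory

/-- If measure-preserving transformations `s_1, s_2, …` of a probability space satisfy
the face relations `s_j ∘ s_i = s_i ∘ s_{j+1}` (`1 ≤ i ≤ j`, indices modelled by `ℕ+`)
and `μ` is ergodic for the whole family, then `μ` is already `s_1`-ergodic. -/
theorem stmt_16 {Θ : Type*} [MeasurableSpace Θ] (μ : Measure Θ) [IsProbabilityMeasure μ]
    (s : ℕ+ → Θ → Θ) (hmp : ∀ i, MeasurePreserving (s i) μ μ)
    (hface : ∀ i j : ℕ+, i ≤ j → s j ∘ s i = s i ∘ s (j + 1))
    (herg : ∀ E : Set Θ, MeasurableSet E → (∀ i, s i ⁻¹' E = E) → μ E = 0 ∨ μ E = 1) :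
    ∀ E : Set Θ, MeasurableSet E → s 1 ⁻¹' E = E → μ E = 0 ∨ μ E = 1 := by
  intro E hE h1
  -- An `s 1`-invariant set is invariant under every `s i`, so `herg` applies to it:
  -- by the face relation with `i = 1`,
  -- `s (j+1) ⁻¹' E = (s 1 ∘ s (j+1)) ⁻¹' E = (s j ∘ s 1) ⁻¹' E = s 1 ⁻¹' (s j ⁻¹' E)`.
  refine herg E hE fun i => ?_
  induction i using PNat.recOn with
  | one => exact h1
  | succ j ih =>
    calc s (j + 1) ⁻¹' E = s (j + 1) ⁻¹' (s 1 ⁻¹' E) := by rw [h1]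
      _ = (s j ∘ s 1) ⁻¹' E := by rw [hface 1 j one_le, Set.preimage_comp]
      _ = E := by rw [Set.preimage_comp, ih, h1]
end

section
/- Let (Θ, Σ, μ) be a probability space and let s_i : Θ → Θ (i ∈ ℕ) be measure-preserving measurable transformations satisfying the face relations s_j ∘ s_i = s_i ∘ s_{j+1} for all 1 ≤ i ≤ j. Suppose μ is s_1-ergodic (every measurable E with s_1^{-1}E = E has μ(E) ∈ {0,1}) but not s_2-ergodic (there is a measurable E with s_2^{-1}E = E and 0 < μ(E) < 1). Then there exists a measurable map φ : Θ → {0,1}^ℕ such that φ(s_i θ) = S_i(φ(θ)) for all i ∈ ℕ and θ ∈ Θ, where S_i denotes the deletion map on {0,1}^ℕ, and such that the pushforward measure φ_*μ is not a Dirac point mass. -/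
/-!
Let `E` be `s₂`-invariant with `0 < μ E < 1`. The factor map is the `E`-itinerary under `s₁`,
`φ(θ)ₙ = 1_E(s₁ⁿ⁻¹ θ)`. Two consequences of the face relations make it equivariant:

* `E` is invariant under every `s_k` with `k ≥ 2`: for `k ≥ 3`, `s₂ ∘ s_k = s_{k-1} ∘ s₂`, so
  `1_E ∘ s_k = 1_E ∘ s₂ ∘ s_k = 1_E ∘ s_{k-1} ∘ s₂`, and induction on `k` applies.
* `s₁ ∘ s_{k+1} = s_k ∘ s₁`, so in `s₁ⁿ⁻¹ ∘ s_i` the map `s_i` can be moved to the left, its index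
  dropping by one at each step. If `n < i` it ends as some `s_k` with `k ≥ 2`, which `E` does not
  see; if `n ≥ i` it becomes `s₁` on the way, giving `s₁ⁿ`.

The first coordinate of `φ` is `1_E`, which is not almost surely constant, so `φ_*μ` is not a point
mass.
-/

open MeasureTheory

/-- The deletion map `S_i : {0,1}^ℕ → {0,1}^ℕ` (ℕ = {1,2,…} modelled by `ℕ+`,
`{0,1}` modelled by `Bool`): `(S_i ω)_n = ω_n` for `n < i`, `(S_i ω)_n = ω_{n+1}`
for `n ≥ i`. -/
def Sdel (i : ℕ+) (ω : ℕ+ → Bool) : ℕ+ → Bool :=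
  fun n => if n < i then ω n else ω (n + 1)

/-- For maps `t k = s_{k+1}` indexed from zero, a set invariant under `t 1` is invariant under
all `t (k + 1)`. -/
lemma mem_face_iff {Θ : Type*} (t : ℕ → Θ → Θ) (E : Set Θ)
    (ht : ∀ i j, i ≤ j → ∀ θ, t j (t i θ) = t i (t (j + 1) θ))
    (hE : ∀ θ, t 1 θ ∈ E ↔ θ ∈ E) (k : ℕ) (θ : Θ) : t (k + 1) θ ∈ E ↔ θ ∈ E := by
  induction k generalizing θ with
  | zero => exact hE θ
  | succ k ih => rw [← hE, ← ht 1 (k + 1) (by omega), ih, hE]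

/-- Equivariance of the itinerary `m ↦ 1_E(t₀ᵐ θ)`: precomposing with `t k` deletes its entry of
index `k`. -/
lemma iterate_mem_iff {Θ : Type*} (t : ℕ → Θ → Θ) (E : Set Θ)
    (ht : ∀ i j, i ≤ j → ∀ θ, t j (t i θ) = t i (t (j + 1) θ))
    (hE : ∀ θ, t 1 θ ∈ E ↔ θ ∈ E) (m k : ℕ) (θ : Θ) :
    (t 0)^[m] (t k θ) ∈ E ↔ (t 0)^[if m < k then m else m + 1] θ ∈ E := by
  induction m generalizing k θ with
  | zero =>
    cases k with
    | zero => simp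
    | succ k => simpa using mem_face_iff t E ht hE k θ
  | succ m ih =>
    cases k with
    | zero => simp
    | succ k =>
      rw [Function.iterate_succ_apply, ← ht 0 k (by omega), ih, ← Function.iterate_succ_apply]
      by_cases h : m < k <;> simp [h]

/-- If measure-preserving transformations `s_1, s_2, …` of a probability space satisfy
the face relations, `μ` is `s_1`-ergodic but not `s_2`-ergodic, then there is an
equivariant measurable factor map to `{0,1}^ℕ` (with the deletion maps) whose
pushforward measure is not a point mass. -/
theorem stmt_17 {Θ : Type*} [MeasurableSpace Θ] (μ : Measure Θ) [IsProbabilityMeasure μ]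
    (s : ℕ+ → Θ → Θ) (hmp : ∀ i, MeasurePreserving (s i) μ μ)
    (hface : ∀ i j : ℕ+, i ≤ j → s j ∘ s i = s i ∘ s (j + 1))
    (herg1 : ∀ E : Set Θ, MeasurableSet E → s 1 ⁻¹' E = E → μ E = 0 ∨ μ E = 1)
    (hnerg2 : ∃ E : Set Θ, MeasurableSet E ∧ s 2 ⁻¹' E = E ∧ 0 < μ E ∧ μ E < 1) :
    ∃ φ : Θ → (ℕ+ → Bool), Measurable φ ∧
      (∀ (i : ℕ+) (θ : Θ), φ (s i θ) = Sdel i (φ θ)) ∧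
      ¬ ∃ ω : ℕ+ → Bool, Measure.map φ μ = Measure.dirac ω := by
  classical
  obtain ⟨E, hEm, hE, h0, h1⟩ := hnerg2
  have ht : ∀ i j : ℕ, i ≤ j → ∀ θ, s j.succPNat (s i.succPNat θ) =
      s i.succPNat (s (j + 1).succPNat θ) := fun i j hij θ =>
    congrFun (hface i.succPNat j.succPNat (Nat.succPNat_le_succPNat.2 hij)) θ
  have hE' : ∀ θ, s (Nat.succPNat 1) θ ∈ E ↔ θ ∈ E := fun θ => Set.ext_iff.1 hE θ
  have hφ : Measurable fun (θ : Θ) (n : ℕ+) => decide ((s 1)^[n.natPred] θ ∈ E) := by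
    refine measurable_pi_lambda _ fun n => measurable_to_bool ?_
    have := ((hmp 1).measurable.iterate n.natPred) hEm
    convert this using 1
    ext θ
    simp
  refine ⟨_, hφ, fun i θ => ?_, ?_⟩
  · funext n
    have key := iterate_mem_iff (fun k => s k.succPNat) E ht hE' n.natPred i.natPred θ
    simp only [PNat.succPNat_natPred, PNat.natPred_lt_natPred] at key
    have hn : (n + 1).natPred = n.natPred + 1 := n.natPred_add_one.symm
    by_cases h : n < i
    · simp only [Sdel, h, if_true] at key ⊢
      exact decide_eq_decide.2 key
    · simp only [Sdel, h, if_false, hn] at key ⊢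
      exact decide_eq_decide.2 key
  · rintro ⟨ω, hω⟩
    have hA : MeasurableSet {x : ℕ+ → Bool | x 1 = true} :=
      (measurable_pi_apply (X := fun _ : ℕ+ => Bool) 1) (measurableSet_singleton true)
    have h2 := congrArg (fun ν => ν {x : ℕ+ → Bool | x 1 = true}) hω
    have h3 : (fun (θ : Θ) (n : ℕ+) => decide ((s 1)^[n.natPred] θ ∈ E)) ⁻¹'
        {x | x 1 = true} = E := by
      ext θ
      simp [PNat.natPred]
    simp only [Measure.map_apply hφ hA, h3, Measure.dirac_apply' _ hA] at h2
    by_cases h : ω 1 = true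
    · simp [h] at h2
      exact h1.ne h2
    · simp [h] at h2
      exact h0.ne' h2
end
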